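/- For every a ∈ ℂ \ ℝ_{≤0} and every b ∈ ℂ with Re(b) > 0, there exists C > 0 independent of N such that for every N ∈ ℕ, ε(N, a, b) ≤ C · exp(−2 Re√(2a(N+1))), where √· is the principal square root. -/

import Mathlib

open MeasureTheory Set
open scoped ENNReal

/-- The Laguerre polynomial `L_n(x) = ∑_{k=0}^n C(n, n-k) (-x)^k / k!`. -/
noncomputable def lagL (n : ℕ) (x : ℝ) : ℝ :=
  ∑ k ∈ Finset.range (n + 1), (n.choose (n - k) : ℝ) * (-x) ^ k / (Nat.factorial k : ℝ)

/-- The Laguerre function `φ_n(x) = e^{-x} L_n(2x)`. -/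
noncomputable def lagPhi (n : ℕ) (x : ℝ) : ℝ := Real.exp (-x) * lagL n (2 * x)

/-- The orthogonal projection in `L²((0,∞))` onto `span {φ_0, …, φ_N}`,
written out via the expansion coefficients `2⟨f, φ_n⟩`. -/
noncomputable def lagProj (N : ℕ) (f : ℝ → ℂ) (ξ : ℝ) : ℂ :=
  ∑ n ∈ Finset.range (N + 1),
    (2 * ∫ t in Ioi (0:ℝ), f t * (lagPhi n t : ℂ)) * (lagPhi n ξ : ℂ)

/-- `ε(N, a, b) = ‖(I - Π_N)[ξ ↦ (a+ξ)⁻¹ (Π_N e^{-b·})(ξ)]‖_{L²((0,∞))}`. -/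
noncomputable def lagEps (N : ℕ) (a b : ℂ) : ℝ≥0∞ :=
  eLpNorm (fun ξ : ℝ =>
      (a + (ξ:ℂ))⁻¹ * lagProj N (fun t => Complex.exp (-b * t)) ξ
        - lagProj N (fun ξ' => (a + (ξ':ℂ))⁻¹
            * lagProj N (fun t => Complex.exp (-b * t)) ξ') ξ) 2
    (volume.restrict (Ioi (0:ℝ)))

/-- complex Laguerre polynomial -/
noncomputable def lagC (n : ℕ) (x : ℂ) : ℂ :=
  ∑ k ∈ Finset.range (n + 1), (n.choose k : ℂ) * (-x) ^ k / (Nat.factorial k : ℂ)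

lemma lagL_eq (n : ℕ) (x : ℝ) : ((lagL n x : ℝ) : ℂ) = lagC n (x : ℂ) := by
  unfold lagL lagC
  push_cast
  refine Finset.sum_congr rfl fun k hk => ?_
  rw [Nat.choose_symm (Nat.lt_succ_iff.mp (Finset.mem_range.mp hk))]

lemma lagPhi_eq (n : ℕ) (x : ℝ) : ((lagPhi n x : ℝ) : ℂ) =
    ∑ k ∈ Finset.range (n + 1), ((n.choose k : ℂ) * (-2) ^ k / (Nat.factorial k : ℂ)) *
      ((x : ℂ) ^ k * Complex.exp (-x)) := by
  unfold lagPhi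
  push_cast [lagL_eq]
  rw [lagC, Finset.mul_sum]
  refine Finset.sum_congr rfl fun k hk => ?_
  rw [show (-(2 * (x:ℂ))) = (-2) * x by ring, mul_pow]
  ring

lemma norm_powexp (s : ℂ) (k : ℕ) {t : ℝ} (ht : 0 < t) :
    ‖(t : ℂ) ^ k * Complex.exp (-s * t)‖ = t ^ k * Real.exp (-s.re * t) := by
  rw [norm_mul, norm_pow, Complex.norm_exp, Complex.norm_real, Real.norm_of_nonneg ht.le]
  simp

lemma powexp_int (s : ℂ) (hs : 0 < s.re) (k : ℕ) :
    IntegrableOn (fun t : ℝ => (t : ℂ) ^ k * Complex.exp (-s * t)) (Ioi 0) := by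
  have h := integrableOn_rpow_mul_exp_neg_mul_rpow (p := 1) (s := k) (b := s.re)
    (by have : (0:ℝ) ≤ k := by positivity
        linarith) one_pos hs
  refine Integrable.mono' h ?_ ?_
  · exact (by fun_prop : Continuous _).aestronglyMeasurable
  · filter_upwards [ae_restrict_mem measurableSet_Ioi] with t ht
    rw [norm_powexp s k ht]
    simp

lemma powexp_integral (s : ℂ) (hs : 0 < s.re) (k : ℕ) :
    ∫ t in Ioi (0:ℝ), (t : ℂ) ^ k * Complex.exp (-s * t) = (k.factorial : ℂ) / s ^ (k + 1) := by
  have hs0 : s ≠ 0 := by rintro rfl; simp at hs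
  induction k with
  | zero =>
    have := integral_exp_mul_complex_Ioi (a := -s) (by simpa using hs) 0
    simp only [pow_zero, one_mul, this]
    simp
  | succ k ih =>
    have hd : ∀ x ∈ Ioi (0:ℝ), HasDerivAt (fun t : ℝ => -((t : ℂ) ^ (k+1) * Complex.exp (-s * t)) / s)
        ((x:ℂ) ^ (k+1) * Complex.exp (-s * x) - ((k+1)/s) * ((x:ℂ) ^ k * Complex.exp (-s * x))) x := by
      intro x _
      have h1 : HasDerivAt (fun t : ℂ => -(t ^ (k+1) * Complex.exp (-s * t)) / s)
        ((x:ℂ) ^ (k+1) * Complex.exp (-s * x) - ((k+1)/s) * ((x:ℂ) ^ k * Complex.exp (-s * x))) (x:ℂ) := by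
        have h2 : HasDerivAt (fun t : ℂ => Complex.exp (-s * t)) (Complex.exp (-s * x) * (-s)) (x:ℂ) := by
          simpa using ((hasDerivAt_id (x:ℂ)).const_mul (-s)).cexp
        convert! (((hasDerivAt_pow (k+1) (x:ℂ)).mul h2).neg.div_const s) using 1
        field_simp
        push_cast
        simp
        ring
      exact h1.comp_ofReal
    have hlim : Filter.Tendsto (fun t : ℝ => -((t : ℂ) ^ (k+1) * Complex.exp (-s * t)) / s)
        Filter.atTop (nhds 0) := by
      have : Filter.Tendsto (fun t : ℝ => ((t : ℂ) ^ (k+1) * Complex.exp (-s * t)))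
        Filter.atTop (nhds 0) := by
        rw [tendsto_zero_iff_norm_tendsto_zero]
        have h := Real.tendsto_pow_mul_exp_neg_atTop_nhds_zero (k+1)
        have h3 := tendsto_rpow_mul_exp_neg_mul_atTop_nhds_zero (k+1) s.re hs
        refine h3.congr' ?_
        filter_upwards [Filter.eventually_gt_atTop 0] with t ht
        rw [norm_powexp s _ ht]
        congr 1
        exact_mod_cast Real.rpow_natCast t (k+1)
      simpa using (this.neg.div_const s)
    have hi := integral_Ioi_of_hasDerivAt_of_tendsto
      (by fun_prop : Continuous (fun t : ℝ => -((t : ℂ) ^ (k+1) * Complex.exp (-s * t)) / s)).continuousWithinAt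
      hd (((powexp_int s hs (k+1))).sub ((powexp_int s hs k).const_mul _)) hlim
    rw [integral_sub (powexp_int s hs (k+1)) ((powexp_int s hs k).const_mul _), integral_const_mul, ih] at hi
    simp at hi
    rw [sub_eq_zero] at hi
    simp only [neg_mul, hi, Nat.factorial_succ]
    push_cast
    field_simp
    ring

lemma exp_phi_eq (b : ℂ) (n : ℕ) (t : ℝ) : Complex.exp (-b * t) * (lagPhi n t : ℂ) =
   ∑ k ∈ Finset.range (n + 1), ((n.choose k : ℂ) * (-2) ^ k / (Nat.factorial k : ℂ)) *
      ((t : ℂ) ^ k * Complex.exp (-(b+1) * t)) := by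
  rw [lagPhi_eq, Finset.mul_sum]
  refine Finset.sum_congr rfl fun k _ => ?_
  rw [show -(b+1) * (t:ℂ) = -b * t + -t by ring, Complex.exp_add]
  ring

lemma exp_phi_int (b : ℂ) (hb : -1 < b.re) (n : ℕ) :
    IntegrableOn (fun t : ℝ => Complex.exp (-b * t) * (lagPhi n t : ℂ)) (Ioi 0) := by
  simp only [exp_phi_eq]
  exact integrable_finsetSum _ fun k _ => (powexp_int (b+1) (by simp; linarith) k).const_mul _

lemma exp_phi_integral (b : ℂ) (hb : -1 < b.re) (n : ℕ) :
    ∫ t in Ioi (0:ℝ), Complex.exp (-b * t) * (lagPhi n t : ℂ) = (b - 1) ^ n / (b + 1) ^ (n + 1) := by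
  simp only [exp_phi_eq]
  have hre : 0 < (b+1).re := by simp; linarith
  have h0 : b + 1 ≠ 0 := by intro h; rw [h] at hre; simp at hre
  rw [integral_finsetSum _ fun k _ => (powexp_int (b+1) hre k).const_mul _]
  simp only [integral_const_mul, powexp_integral (b+1) hre]
  have : (b - 1) ^ n / (b + 1) ^ (n + 1) = (-2 / (b+1) + 1) ^ n / (b+1) := by
    rw [show -2 / (b+1) + 1 = (b-1)/(b+1) by field_simp; ring, div_pow]
    field_simp
    ring
  rw [this, add_pow, Finset.sum_div]
  refine Finset.sum_congr rfl fun k _ => ?_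
  have : (k.factorial : ℂ) ≠ 0 := by exact_mod_cast k.factorial_ne_zero
  rw [div_pow]
  field_simp
  simp
  ring

lemma alt_sum (n j : ℕ) (hj : j ≤ n) :
    ∑ k ∈ Finset.range (n + 1), (-1 : ℂ) ^ k * (n.choose k : ℂ) * ((k + j).choose j : ℂ) =
      if j = n then (-1) ^ n else 0 := by
  have h1 : (fwdDiff 1)^[n] (fun x : ℕ => ((x + j).choose j : ℤ)) 0 = if j = n then 1 else 0 := by
    rw [fwdDiff_iter_comp_add 1 (fun x : ℕ => (x.choose j : ℤ)) j n 0]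
    obtain ⟨m, rfl⟩ := Nat.exists_eq_add_of_le hj
    rw [add_comm j m, Function.iterate_add_apply]
    have := fwdDiff_iter_choose 0 j
    simp only [add_zero, Nat.choose_zero_right] at this
    rw [this]
    rcases m with _ | m
    · simp
    · simp [Function.iterate_succ_apply]
      rw [show (fwdDiff 1)^[m] (fun _ : ℕ => (0:ℤ)) = fun _ => 0 from ?_]
      induction m with
      | zero => rfl
      | succ m ih => rw [Function.iterate_succ_apply, fwdDiff_const]; exact ih (by omega)
  rw [fwdDiff_iter_eq_sum_shift] at h1
  have h2 := congrArg (fun z : ℤ => (-1 : ℂ) ^ n * (z : ℂ)) h1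
  rw [show (if j = n then (-1) ^ n else 0 : ℂ) = (-1) ^ n * (((if j = n then 1 else 0 : ℤ)) : ℂ) by
    split_ifs <;> simp, ← h2]
  push_cast
  rw [Finset.mul_sum]
  refine Finset.sum_congr rfl fun k hk => ?_
  have hk := Nat.lt_succ_iff.mp (Finset.mem_range.mp hk)
  have : (-1:ℂ) ^ n * (-1) ^ (n - k) = (-1) ^ k := by
    rw [← pow_add, show n + (n - k) = 2 * (n - k) + k by omega, pow_add, pow_mul]; simp
  simp only [smul_eq_mul, mul_one, zero_add]
  push_cast
  rw [← this]
  ring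

lemma mono_phi (n j : ℕ) (hj : j ≤ n) :
    ∫ t in Ioi (0:ℝ), ((t:ℂ) ^ j * Complex.exp (-t)) * (lagPhi n t : ℂ) =
      if j = n then (-1) ^ n * (n.factorial : ℂ) / 2 ^ (n+1) else 0 := by
  have he : ∀ t : ℝ, ((t:ℂ) ^ j * Complex.exp (-t)) * (lagPhi n t : ℂ) =
     ∑ k ∈ Finset.range (n + 1), ((n.choose k : ℂ) * (-2) ^ k / (Nat.factorial k : ℂ)) *
      ((t : ℂ) ^ (k + j) * Complex.exp (-2 * t)) := by
    intro t
    rw [lagPhi_eq, Finset.mul_sum]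
    refine Finset.sum_congr rfl fun k _ => ?_
    rw [show (-2:ℂ) * (t:ℂ) = -t + -t by ring, Complex.exp_add]
    ring
  simp only [he]
  have hre : 0 < (2:ℂ).re := by norm_num
  rw [integral_finsetSum _ fun k _ => (powexp_int 2 hre (k+j)).const_mul _]
  simp only [integral_const_mul, powexp_integral 2 hre]
  have h := alt_sum n j hj
  have : (if j = n then (-1) ^ n * (n.factorial : ℂ) / 2 ^ (n+1) else 0) =
     (j.factorial : ℂ) / 2 ^ (j+1) * (if j = n then (-1) ^ n else 0 : ℂ) := by
    split_ifs with h
    · rw [h]; ring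
    · simp
  rw [this, ← h, Finset.mul_sum]
  refine Finset.sum_congr rfl fun k _ => ?_
  have h1 : (k.factorial : ℂ) ≠ 0 := by exact_mod_cast k.factorial_ne_zero
  have h2 : ((k + j).choose j : ℂ) * (k.factorial : ℂ) * (j.factorial : ℂ) = ((k+j).factorial : ℂ) := by
    have := Nat.add_choose_mul_factorial_mul_factorial k j
    exact_mod_cast this
  rw [← h2, show (-2:ℂ) = (-1) * 2 by ring, mul_pow]
  field_simp
  ring

lemma mono_phi_int (n j : ℕ) :
    IntegrableOn (fun t : ℝ => ((t:ℂ) ^ j * Complex.exp (-t)) * (lagPhi n t : ℂ)) (Ioi 0) := by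
  have he : ∀ t : ℝ, ((t:ℂ) ^ j * Complex.exp (-t)) * (lagPhi n t : ℂ) =
     ∑ k ∈ Finset.range (n + 1), ((n.choose k : ℂ) * (-2) ^ k / (Nat.factorial k : ℂ)) *
      ((t : ℂ) ^ (k + j) * Complex.exp (-2 * t)) := by
    intro t
    rw [lagPhi_eq, Finset.mul_sum]
    refine Finset.sum_congr rfl fun k _ => ?_
    rw [show (-2:ℂ) * (t:ℂ) = -t + -t by ring, Complex.exp_add]
    ring
  simp only [he]
  exact integrable_finsetSum _ fun k _ => (powexp_int 2 (by norm_num) (k+j)).const_mul _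

lemma phi_orth_le (m n : ℕ) (h : m ≤ n) :
    ∫ t in Ioi (0:ℝ), (lagPhi m t : ℂ) * (lagPhi n t : ℂ) = if m = n then 1/2 else 0 := by
  have he : ∀ t : ℝ, (lagPhi m t : ℂ) * (lagPhi n t : ℂ) =
     ∑ k ∈ Finset.range (m + 1), ((m.choose k : ℂ) * (-2) ^ k / (Nat.factorial k : ℂ)) *
      (((t : ℂ) ^ k * Complex.exp (-t)) * (lagPhi n t : ℂ)) := by
    intro t
    rw [lagPhi_eq m, Finset.sum_mul]
    refine Finset.sum_congr rfl fun k _ => ?_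
    ring
  simp only [he]
  rw [integral_finsetSum _ fun k _ => (mono_phi_int n k).const_mul _]
  simp only [integral_const_mul]
  rw [Finset.sum_range_succ, Finset.sum_eq_zero, zero_add, mono_phi n m h]
  · split_ifs with h
    · subst h
      have h1 : (m.factorial : ℂ) ≠ 0 := by exact_mod_cast m.factorial_ne_zero
      rw [show (-2:ℂ) = (-1) * 2 by ring, mul_pow, pow_succ]
      simp
      field_simp
      rw [← pow_mul, mul_comm, pow_mul]; simp
    · simp
  · intro k hk
    have hk := Finset.mem_range.mp hk
    rw [mono_phi n k (by omega), if_neg (by omega), mul_zero]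

lemma phi_orth (m n : ℕ) :
    ∫ t in Ioi (0:ℝ), (lagPhi m t : ℂ) * (lagPhi n t : ℂ) = if m = n then 1/2 else 0 := by
  rcases le_total m n with h | h
  · exact phi_orth_le m n h
  · have := phi_orth_le n m h
    simp only [mul_comm, eq_comm] at this ⊢
    exact this
lemma choose_hasSum {𝕜 : Type*} [NormedField 𝕜] [CompleteSpace 𝕜] (k : ℕ) {r : 𝕜} (hr : ‖r‖ < 1) :
    HasSum (fun n : ℕ => (n.choose k : 𝕜) * r ^ n) (r ^ k / (1 - r) ^ (k + 1)) := by
  have h := (hasSum_choose_mul_geometric_of_norm_lt_one k hr).mul_right (r ^ k)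
  have hinj : Function.Injective (fun n : ℕ => n + k) := add_left_injective k
  have : HasSum ((fun n : ℕ => (n.choose k : 𝕜) * r ^ n) ∘ (fun n : ℕ => n + k))
      (r ^ k / (1 - r) ^ (k + 1)) := by
    convert! h using 1
    · funext n; simp [pow_add]; ring
    · ring
  refine (hinj.hasSum_iff ?_).1 this
  intro n hn
  have : n < k := by
    by_contra hc
    exact hn ⟨n - k, by simp; omega⟩
  rw [Nat.choose_eq_zero_of_lt this]; simp

set_option maxHeartbeats 1000000 in
lemma lagC_gen (x w : ℂ) (hw : ‖w‖ < 1) :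
    HasSum (fun n => lagC n x * w ^ n) (Complex.exp (-x * w / (1 - w)) / (1 - w)) := by
  set f : ℕ × ℕ → ℂ := fun p => (-x) ^ p.1 / (p.1.factorial : ℂ) * ((p.2.choose p.1 : ℂ) * w ^ p.2) with hf
  have h1w : (1 - w) ≠ 0 := by
    intro h
    have : w = 1 := by linear_combination -h
    rw [this] at hw; simp at hw
  have h1w' : 0 < 1 - ‖w‖ := by linarith
  have hfs : Summable f := by
    apply Summable.of_norm
    have hn : ∀ k n : ℕ, ‖f (k, n)‖ = ‖x‖ ^ k / (k.factorial : ℝ) * ((n.choose k : ℝ) * ‖w‖ ^ n) := by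
      intro k n; simp [hf]
    have hfib : ∀ k : ℕ, HasSum (fun n => ‖f (k, n)‖)
        (‖x‖ ^ k / (k.factorial : ℝ) * (‖w‖ ^ k / (1 - ‖w‖) ^ (k + 1))) := by
      intro k
      have h0 : ‖(‖w‖ : ℝ)‖ < 1 := by rw [norm_norm]; exact hw
      have h1 := choose_hasSum (𝕜 := ℝ) k h0
      have h2 := h1.mul_left (‖x‖ ^ k / (k.factorial : ℝ))
      exact (funext (hn k) : (fun n => ‖f (k, n)‖) = _) ▸ h2
    rw [summable_prod_of_nonneg (fun _ => norm_nonneg _)]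
    refine ⟨fun k => (hfib k).summable, ?_⟩
    simp only [fun k => (hfib k).tsum_eq]
    have := (Real.summable_pow_div_factorial (‖x‖ * ‖w‖ / (1 - ‖w‖))).mul_right (1 / (1 - ‖w‖))
    refine this.congr fun k => ?_
    rw [div_pow, mul_pow, pow_succ]
    field_simp
  have hfib : ∀ k : ℕ, HasSum (fun n => f (k, n))
        ((-x) ^ k / (k.factorial : ℂ) * (w ^ k / (1 - w) ^ (k + 1))) := fun k =>
      (choose_hasSum k hw).mul_left _
  have hS := hfs.hasSum.prod_fiberwise hfib
  have hE : HasSum (fun k : ℕ => (-x) ^ k / (k.factorial : ℂ) * (w ^ k / (1 - w) ^ (k + 1)))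
      (Complex.exp (-x * w / (1 - w)) / (1 - w)) := by
    have := (NormedSpace.expSeries_div_hasSum_exp (-x * w / (1 - w))).div_const (1 - w)
    rw [← Complex.exp_eq_exp_ℂ] at this
    convert! this using 1
    funext k
    rw [div_pow, mul_pow, pow_succ]
    field_simp
  have hT := hS.unique hE
  have hs2 : HasSum (f ∘ Prod.swap) (Complex.exp (-x * w / (1 - w)) / (1 - w)) := by
    rw [← hT]
    exact (Equiv.prodComm ℕ ℕ).hasSum_iff.2 hfs.hasSum
  refine hs2.prod_fiberwise fun n => ?_
  have : lagC n x * w ^ n = ∑ k ∈ Finset.range (n+1), (f ∘ Prod.swap) (n, k) := by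
    rw [lagC, Finset.sum_mul]
    refine Finset.sum_congr rfl fun k _ => ?_
    simp [hf]; ring
  rw [this]
  apply hasSum_sum_of_ne_finset_zero
  intro k hk
  have : n < k := by simpa using hk
  simp [hf, Nat.choose_eq_zero_of_lt this]

lemma lagC_div (μ : ℂ) (hμ : 0 < μ.re) (B : ℝ) :
    ∃ M : ℕ, B ≤ ∑ n ∈ Finset.range M, ‖lagC n (-μ ^ 2)‖ ^ 2 := by
  by_contra! hcon
  have hB : 0 < B := by simpa using hcon 0
  have hμ0 : μ ≠ 0 := by rintro rfl; simp at hμ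
  have hnμ : 0 < ‖μ‖ := norm_pos_iff.2 hμ0
  have hmain : ∀ w : ℂ, ‖w‖ < 1 → ‖Complex.exp (μ ^ 2 * w / (1 - w)) / (1 - w)‖ ^ 2 ≤ B * (1 - ‖w‖ ^ 2)⁻¹ := by
    intro w hw
    have hg := (lagC_gen (-μ ^ 2) w hw).tendsto_sum_nat
    rw [neg_neg] at hg
    refine le_of_tendsto (hg.norm.pow 2) (Filter.Eventually.of_forall fun M => ?_)
    have hw2 : ‖w‖ ^ 2 < 1 := by nlinarith [norm_nonneg w]
    calc ‖∑ n ∈ Finset.range M, lagC n (-μ ^ 2) * w ^ n‖ ^ 2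
        ≤ (∑ n ∈ Finset.range M, ‖lagC n (-μ ^ 2)‖ * ‖w ^ n‖) ^ 2 := by
          gcongr
          exact (norm_sum_le _ _).trans (by simp)
      _ ≤ (∑ n ∈ Finset.range M, ‖lagC n (-μ ^ 2)‖ ^ 2) * ∑ n ∈ Finset.range M, ‖w ^ n‖ ^ 2 :=
          Finset.sum_mul_sq_le_sq_mul_sq _ _ _
      _ ≤ B * (1 - ‖w‖ ^ 2)⁻¹ := by
          gcongr
          · exact (hcon M).le
          · have := (hasSum_geometric_of_lt_one (sq_nonneg ‖w‖) hw2)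
            refine le_trans (le_of_eq ?_) (sum_le_hasSum (Finset.range M) (fun _ _ => by positivity) this)
            refine Finset.sum_congr rfl fun n _ => ?_
            rw [norm_pow, ← pow_mul, ← pow_mul, mul_comm]
  set K : ℝ := Real.exp (-2 * (μ ^ 2).re) * μ.re / ‖μ‖ ^ 2 with hK
  have hKpos : 0 < K := by positivity
  set δ : ℝ := min (μ.re / ‖μ‖ ^ 2) (K / (B + 1)) with hδ
  have hδpos : 0 < δ := lt_min (by positivity) (by positivity)
  have hδ1 : δ * ‖μ‖ ^ 2 ≤ μ.re := by
    have := min_le_left (μ.re / ‖μ‖ ^ 2) (K / (B + 1))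
    rw [← hδ, le_div_iff₀ (by positivity)] at this
    exact this
  have hδ2 : δ * (B + 1) ≤ K := by
    have := min_le_right (μ.re / ‖μ‖ ^ 2) (K / (B + 1))
    rw [← hδ, le_div_iff₀ (by positivity)] at this
    exact this
  have hw : ‖1 - (δ:ℂ) * μ‖ ^ 2 = 1 - 2 * δ * μ.re + δ ^ 2 * ‖μ‖ ^ 2 := by
    rw [← Complex.normSq_eq_norm_sq, ← Complex.normSq_eq_norm_sq, Complex.normSq_apply, Complex.normSq_apply]
    simp
    ring
  have hw1 : δ * μ.re ≤ 1 - ‖1 - (δ:ℂ) * μ‖ ^ 2 := by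
    rw [hw]; nlinarith
  have hlt : ‖1 - (δ:ℂ) * μ‖ < 1 := by
    have : 0 < δ * μ.re := by positivity
    nlinarith [norm_nonneg (1 - (δ:ℂ) * μ)]
  have h := hmain _ hlt
  have hδ0 : (δ:ℂ) ≠ 0 := by exact_mod_cast hδpos.ne'
  have hexp : μ ^ 2 * (1 - (δ:ℂ) * μ) / (1 - (1 - (δ:ℂ) * μ)) = ((δ⁻¹ : ℝ) : ℂ) * μ - μ ^ 2 := by
    push_cast
    field_simp
    ring
  rw [hexp, norm_div, Complex.norm_exp, sub_sub_cancel, norm_mul, Complex.norm_real,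
    Real.norm_of_nonneg hδpos.le, Complex.sub_re, Complex.re_ofReal_mul] at h
  have h1 : Real.exp (-2 * (μ ^ 2).re) ≤ Real.exp (δ⁻¹ * μ.re - (μ^2).re) ^ 2 := by
    rw [← Real.exp_nat_mul]
    apply Real.exp_le_exp.2
    have : 0 < δ⁻¹ * μ.re := by positivity
    push_cast
    linarith
  have h2 : B * (1 - ‖1 - (δ:ℂ) * μ‖ ^ 2)⁻¹ ≤ B * (δ * μ.re)⁻¹ := by gcongr
  have h3 : Real.exp (-2 * (μ ^ 2).re) / (δ * ‖μ‖) ^ 2 ≤ B * (δ * μ.re)⁻¹ := by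
    refine le_trans ?_ (h.trans h2)
    rw [div_pow]
    gcongr
  have h4 : K / δ ≤ B := by
    have := mul_le_mul_of_nonneg_right h3 (by positivity : 0 ≤ δ * μ.re)
    rw [mul_assoc, inv_mul_cancel₀ (by positivity), mul_one] at this
    refine le_trans (le_of_eq ?_) this
    rw [hK]; field_simp
  rw [div_le_iff₀ hδpos] at h4
  nlinarith
lemma exp_sub_one_ge (s : ℂ) : Real.exp s.re - 1 ≤ ‖Complex.exp s - 1‖ := by
  have := norm_sub_norm_le (Complex.exp s) 1
  rwa [Complex.norm_exp, norm_one] at this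

lemma exp_sub_one_ge' (s : ℂ) : s.re ≤ ‖Complex.exp s - 1‖ := by
  have := exp_sub_one_ge s
  have := Real.add_one_le_exp s.re
  linarith

lemma exp_sub_one_ne {s : ℂ} (hs : 0 < s.re) : Complex.exp s - 1 ≠ 0 := by
  rw [← norm_pos_iff]
  exact hs.trans_le (exp_sub_one_ge' s)

lemma re_tau {s : ℂ} (hs : 0 < s.re) : -1 < (2 / (Complex.exp s - 1)).re := by
  have h0 := exp_sub_one_ne hs
  set w := Complex.exp s with hw
  have hn : 1 < Complex.normSq w := by
    rw [Complex.normSq_eq_norm_sq, hw, Complex.norm_exp]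
    have := Real.add_one_le_exp s.re
    nlinarith
  have hp : 0 < Complex.normSq (w - 1) := Complex.normSq_pos.2 h0
  rw [Complex.div_re]
  simp only [Complex.re_ofNat, Complex.im_ofNat, zero_mul, zero_div, add_zero]
  rw [lt_div_iff₀ hp]
  rw [Complex.normSq_apply] at hn ⊢
  simp
  nlinarith

lemma h_bound {s : ℂ} (hs : 0 < s.re) :
    ‖1 / (Complex.exp s - 1) - 1 / s‖ ≤ ‖s‖ / s.re + 1 := by
  have h0 := exp_sub_one_ne hs
  have hs0 : s ≠ 0 := by rintro rfl; simp at hs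
  have hsn : 0 < ‖s‖ := norm_pos_iff.2 hs0
  have hg := exp_sub_one_ge' s
  rcases le_total ‖s‖ 1 with h | h
  · have : 1 / (Complex.exp s - 1) - 1 / s = -(Complex.exp s - 1 - s) / (s * (Complex.exp s - 1)) := by
      field_simp; ring
    rw [this, norm_div, norm_neg, norm_mul]
    have h1 := Complex.norm_exp_sub_one_sub_id_le h
    calc _ ≤ ‖s‖ ^ 2 / (‖s‖ * s.re) := by gcongr
      _ = ‖s‖ / s.re := by field_simp
      _ ≤ _ := by linarith
  · refine (norm_sub_le _ _).trans ?_
    rw [norm_div, norm_div, norm_one]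
    have h1 : 1 / ‖Complex.exp s - 1‖ ≤ ‖s‖ / s.re := by gcongr
    have h2 : 1 / ‖s‖ ≤ 1 := by rw [div_le_one hsn]; exact h
    linarith

lemma w_bound {s : ℂ} (hs : 0 < s.re) :
    ‖2 * s * Complex.exp s / (Complex.exp s - 1) ^ 2‖ ≤ 2 * ‖s‖ / s.re ^ 2 := by
  have hg := exp_sub_one_ge s
  have hx : s.re * Real.exp (s.re / 2) ≤ Real.exp s.re - 1 := by
    have h1 := Real.self_le_sinh_iff.2 (by linarith : 0 ≤ s.re / 2)
    rw [Real.sinh_eq] at h1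
    have h2 : Real.exp (s.re) = Real.exp (s.re/2) * Real.exp (s.re/2) := by
      rw [← Real.exp_add]; ring_nf
    have h3 : Real.exp (-(s.re/2)) * Real.exp (s.re/2) = 1 := by
      rw [← Real.exp_add]; simp
    nlinarith [Real.exp_pos (s.re/2)]
  have h2 : s.re ^ 2 * Real.exp s.re ≤ ‖Complex.exp s - 1‖ ^ 2 := by
    have : s.re ^ 2 * Real.exp s.re = (s.re * Real.exp (s.re / 2)) ^ 2 := by
      rw [mul_pow, ← Real.exp_nat_mul]; congr 2; push_cast; ring
    rw [this]
    gcongr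
    linarith
  rw [norm_div, norm_mul, norm_mul, norm_pow, Complex.norm_exp]
  simp only [Complex.norm_ofNat]
  have := Real.exp_pos s.re
  calc _ ≤ 2 * ‖s‖ * Real.exp s.re / (s.re ^ 2 * Real.exp s.re) := by gcongr
    _ = _ := by field_simp

noncomputable def sR (μ : ℂ) (ρ v : ℝ) : ℂ := ((ρ * Real.exp v : ℝ) : ℂ) * μ
noncomputable def tauR (μ : ℂ) (ρ v : ℝ) : ℂ := 2 / (Complex.exp (sR μ ρ v) - 1)
noncomputable def wR (μ : ℂ) (ρ v : ℝ) : ℂ :=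
  2 * sR μ ρ v * Complex.exp (sR μ ρ v) / (Complex.exp (sR μ ρ v) - 1) ^ 2

lemma sR_re (μ : ℂ) (ρ v : ℝ) : (sR μ ρ v).re = ρ * Real.exp v * μ.re := by
  rw [sR, Complex.re_ofReal_mul]

lemma sR_norm (μ : ℂ) {ρ : ℝ} (hρ : 0 < ρ) (v : ℝ) : ‖sR μ ρ v‖ = ρ * Real.exp v * ‖μ‖ := by
  rw [sR, norm_mul, Complex.norm_real, Real.norm_of_nonneg (by positivity)]

lemma sR_re_pos {μ : ℂ} (hμ : 0 < μ.re) {ρ : ℝ} (hρ : 0 < ρ) (v : ℝ) : 0 < (sR μ ρ v).re := by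
  rw [sR_re]; positivity

lemma sR_ratio {μ : ℂ} (hμ : 0 < μ.re) {ρ : ℝ} (hρ : 0 < ρ) (v : ℝ) :
    ‖sR μ ρ v‖ / (sR μ ρ v).re = ‖μ‖ / μ.re := by
  rw [sR_norm μ hρ, sR_re]
  have := Real.exp_pos v
  field_simp

lemma sR_deriv (μ : ℂ) (ρ v : ℝ) : HasDerivAt (fun v => sR μ ρ v) (sR μ ρ v) v := by
  unfold sR
  exact (((Real.hasDerivAt_exp v).const_mul ρ).ofReal_comp).mul_const μ

lemma sR_cont (μ : ℂ) (ρ : ℝ) : Continuous (fun v => sR μ ρ v) := by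
  unfold sR; fun_prop

lemma tauR_deriv {μ : ℂ} (hμ : 0 < μ.re) {ρ : ℝ} (hρ : 0 < ρ) (v : ℝ) :
    HasDerivAt (fun v => tauR μ ρ v) (-wR μ ρ v) v := by
  have h0 := exp_sub_one_ne (sR_re_pos hμ hρ v)
  unfold tauR wR
  have h := ((hasDerivAt_const v (2:ℂ)).div ((sR_deriv μ ρ v).cexp.sub_const 1) h0)
  convert! h using 1
  ring

lemma tauR_cont {μ : ℂ} (hμ : 0 < μ.re) {ρ : ℝ} (hρ : 0 < ρ) : Continuous (fun v => tauR μ ρ v) :=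
  continuous_iff_continuousAt.2 fun v => (tauR_deriv hμ hρ v).continuousAt

lemma wR_cont {μ : ℂ} (hμ : 0 < μ.re) {ρ : ℝ} (hρ : 0 < ρ) : Continuous (fun v => wR μ ρ v) := by
  unfold wR
  have := sR_cont μ ρ
  refine Continuous.div (by fun_prop) (by fun_prop) fun v => ?_
  exact pow_ne_zero _ (exp_sub_one_ne (sR_re_pos hμ hρ v))

/-- the constant -/
noncomputable def KR (μ : ℂ) : ℝ := Real.exp (‖μ ^ 2‖ * (‖μ‖ / μ.re + 1))

lemma expa_bound {μ : ℂ} (hμ : 0 < μ.re) {ρ : ℝ} (hρ : 0 < ρ) (v : ℝ) :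
    ‖Complex.exp (-(μ ^ 2 / 2) * tauR μ ρ v)‖ ≤ KR μ * Real.exp (-(μ.re / ρ * Real.exp (-v))) := by
  have hs := sR_re_pos hμ hρ v
  have hs0 : sR μ ρ v ≠ 0 := by intro h; rw [h] at hs; simp at hs
  have hμ0 : μ ≠ 0 := by rintro rfl; simp at hμ
  have hb := h_bound hs
  rw [sR_ratio hμ hρ] at hb
  have e1 : -(μ ^ 2 / 2) * tauR μ ρ v = -(μ ^ 2 * (1 / (Complex.exp (sR μ ρ v) - 1) - 1 / sR μ ρ v))
      - ((Real.exp (-v) / ρ : ℝ) : ℂ) * μ := by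
    have : ((Real.exp (-v) / ρ : ℝ) : ℂ) * μ = μ ^ 2 * (1 / sR μ ρ v) := by
      rw [sR, Real.exp_neg]
      have : (ρ : ℂ) ≠ 0 := by exact_mod_cast hρ.ne'
      push_cast
      field_simp
    rw [this, tauR]; ring
  rw [e1, Complex.norm_exp, KR, ← Real.exp_add, Complex.sub_re, Complex.re_ofReal_mul]
  apply Real.exp_le_exp.2
  have h2 : (-(μ ^ 2 * (1 / (Complex.exp (sR μ ρ v) - 1) - 1 / sR μ ρ v))).re ≤
      ‖μ ^ 2‖ * (‖μ‖ / μ.re + 1) := by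
    refine (Complex.re_le_norm _).trans ?_
    rw [norm_neg, norm_mul]
    gcongr
  have : Real.exp (-v) / ρ * μ.re = μ.re / ρ * Real.exp (-v) := by ring
  linarith

lemma cosh_ge (v : ℝ) : 1 + v ^ 2 / 2 ≤ Real.cosh v := by
  have h : Real.cosh v = 1 + 2 * Real.sinh (v/2) ^ 2 := by
    have := Real.cosh_two_mul (v/2)
    rw [show 2 * (v/2) = v by ring, Real.cosh_sq] at this
    linarith
  have h2 : (v/2) ^ 2 ≤ Real.sinh (v/2) ^ 2 := by
    rw [sq_le_sq, Real.abs_sinh]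
    exact Real.self_le_sinh_iff.2 (abs_nonneg _)
  rw [h]; nlinarith

lemma D_int {A : ℝ} (hA : 0 < A) :
    Integrable (fun v : ℝ => Real.exp (-(A * Real.exp (-v))) * Real.exp (-v)) := by
  refine Integrable.mono' (integrable_inv_one_add_sq.const_mul (1 + 2 / A ^ 2)) ?_ ?_
  · exact (by fun_prop : Continuous _).aestronglyMeasurable
  · refine Filter.Eventually.of_forall fun v => ?_
    rw [Real.norm_of_nonneg (by positivity), ← div_eq_mul_inv, le_div_iff₀ (by positivity)]
    have hc := cosh_ge v
    rw [Real.cosh_eq] at hc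
    set y := Real.exp (-v) with hy
    have hy0 : 0 < y := Real.exp_pos _
    have hyy : y * Real.exp v = 1 := by rw [hy, ← Real.exp_add]; simp
    have hE : 0 < Real.exp (-(A*y)) := Real.exp_pos _
    have h1 : 1 + v ^ 2 ≤ y + Real.exp v := by linarith
    have h2 : y * (1 + v ^ 2) ≤ y ^ 2 + 1 := by nlinarith
    have h3 : Real.exp (-(A*y)) * y ^ 2 ≤ 2 / A ^ 2 := by
      have := Real.quadratic_le_exp_of_nonneg (by positivity : 0 ≤ A * y)
      rw [Real.exp_neg, inv_mul_le_iff₀ (Real.exp_pos _), mul_div_assoc', le_div_iff₀ (by positivity)]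
      nlinarith [mul_pos hA hy0]
    have h4 : Real.exp (-(A*y)) ≤ 1 := by
      rw [Real.exp_le_one_iff]; nlinarith [mul_pos hA hy0]
    calc Real.exp (-(A*y)) * y * (1 + v^2) = Real.exp (-(A*y)) * (y * (1 + v^2)) := by ring
      _ ≤ Real.exp (-(A*y)) * (y ^ 2 + 1) := by gcongr
      _ ≤ _ := by linarith

lemma aw_bound {μ : ℂ} (hμ : 0 < μ.re) {ρ : ℝ} (hρ : 0 < ρ) (v : ℝ) :
    ‖Complex.exp (-(μ ^ 2 / 2) * tauR μ ρ v) * wR μ ρ v‖ ≤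
      (KR μ * (2 * ‖μ‖ / (ρ * μ.re ^ 2))) *
        (Real.exp (-(μ.re / ρ * Real.exp (-v))) * Real.exp (-v)) := by
  have h1 := expa_bound hμ hρ v
  have h2 : ‖wR μ ρ v‖ ≤ 2 * ‖μ‖ / (ρ * μ.re ^ 2) * Real.exp (-v) := by
    refine (w_bound (sR_re_pos hμ hρ v)).trans (le_of_eq ?_)
    rw [sR_norm μ hρ, sR_re, Real.exp_neg]
    have := Real.exp_pos v
    field_simp
  rw [norm_mul]
  have hK : 0 < KR μ := Real.exp_pos _
  calc _ ≤ (KR μ * Real.exp (-(μ.re / ρ * Real.exp (-v)))) * (2 * ‖μ‖ / (ρ * μ.re ^ 2) * Real.exp (-v)) := by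
        gcongr
    _ = _ := by ring

lemma aw_int {μ : ℂ} (hμ : 0 < μ.re) {ρ : ℝ} (hρ : 0 < ρ) :
    Integrable (fun v : ℝ => Complex.exp (-(μ ^ 2 / 2) * tauR μ ρ v) * wR μ ρ v) := by
  have := tauR_cont hμ hρ
  have := wR_cont hμ hρ
  refine Integrable.mono' ((D_int (by positivity : 0 < μ.re / ρ)).const_mul
    (KR μ * (2 * ‖μ‖ / (ρ * μ.re ^ 2)))) ?_ ?_
  · exact (by fun_prop : Continuous _).aestronglyMeasurable
  · exact Filter.Eventually.of_forall (aw_bound hμ hρ)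

lemma exi_bound {μ : ℂ} (hμ : 0 < μ.re) {ρ : ℝ} (hρ : 0 < ρ) (v : ℝ) {ξ : ℝ} (hξ : 0 < ξ) :
    ‖Complex.exp (-(ξ:ℂ) * tauR μ ρ v)‖ ≤ Real.exp ξ := by
  rw [Complex.norm_exp]
  apply Real.exp_le_exp.2
  have := re_tau (sR_re_pos hμ hρ v)
  rw [← tauR] at this
  rw [← Complex.ofReal_neg, Complex.re_ofReal_mul]
  nlinarith

lemma inv_repr {μ : ℂ} (hμ : 0 < μ.re) {ρ : ℝ} (hρ : 0 < ρ) {ξ : ℝ} (hξ : 0 < ξ) :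
    ∫ v : ℝ, Complex.exp (-(μ ^ 2 / 2) * tauR μ ρ v) * wR μ ρ v * Complex.exp (-(ξ:ℂ) * tauR μ ρ v)
      = (μ ^ 2 / 2 + (ξ:ℂ))⁻¹ := by
  have hc := tauR_cont hμ hρ
  have hc2 := wR_cont hμ hρ
  set l := μ ^ 2 / 2 + (ξ:ℂ) with hl
  have hi : Integrable (fun v : ℝ => Complex.exp (-(μ ^ 2 / 2) * tauR μ ρ v) * wR μ ρ v *
      Complex.exp (-(ξ:ℂ) * tauR μ ρ v)) := by
    refine (aw_int hμ hρ).mul_bdd (c := Real.exp ξ)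
      (by fun_prop : Continuous _).aestronglyMeasurable ?_
    exact Filter.Eventually.of_forall fun v => exi_bound hμ hρ v hξ
  have hcomb : ∀ v, Complex.exp (-(μ ^ 2 / 2) * tauR μ ρ v) * Complex.exp (-(ξ:ℂ) * tauR μ ρ v) =
      Complex.exp (-l * tauR μ ρ v) := by
    intro v; rw [← Complex.exp_add, hl]; ring_nf
  have hd : ∀ v, HasDerivAt (fun v => Complex.exp (-l * tauR μ ρ v))
      (l * (Complex.exp (-(μ ^ 2 / 2) * tauR μ ρ v) * wR μ ρ v *
      Complex.exp (-(ξ:ℂ) * tauR μ ρ v))) v := by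
    intro v
    have := ((tauR_deriv hμ hρ v).const_mul (-l)).cexp
    convert! this using 1
    rw [← hcomb]; ring
  have hbot : Filter.Tendsto (fun v => Complex.exp (-l * tauR μ ρ v)) Filter.atBot (nhds 0) := by
    have hz : Filter.Tendsto (fun v => KR μ * Real.exp (-(μ.re / ρ * Real.exp (-v))) * Real.exp ξ)
        Filter.atBot (nhds (KR μ * 0 * Real.exp ξ)) := by
      refine (Filter.Tendsto.const_mul _ ?_).mul_const _
      refine Real.tendsto_exp_neg_atTop_nhds_zero.comp ?_
      refine Filter.Tendsto.const_mul_atTop (by positivity) ?_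
      exact Real.tendsto_exp_atTop.comp Filter.tendsto_neg_atBot_atTop
    rw [mul_zero, zero_mul] at hz
    refine squeeze_zero_norm (fun v => ?_) hz
    rw [← hcomb, norm_mul]
    have := exi_bound hμ hρ v hξ
    have := expa_bound hμ hρ v
    have hK : 0 < KR μ := Real.exp_pos _
    gcongr
  have htop : Filter.Tendsto (fun v => Complex.exp (-l * tauR μ ρ v)) Filter.atTop (nhds 1) := by
    have ht : Filter.Tendsto (fun v => tauR μ ρ v) Filter.atTop (nhds 0) := by
      have hz : Filter.Tendsto (fun v => 2 / (ρ * Real.exp v * μ.re)) Filter.atTop (nhds 0) := by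
        refine Filter.Tendsto.const_div_atTop ?_ 2
        exact (Real.tendsto_exp_atTop.const_mul_atTop hρ).atTop_mul_const hμ
      refine squeeze_zero_norm (fun v => ?_) hz
      rw [tauR, norm_div, ← sR_re]
      have := exp_sub_one_ge' (sR μ ρ v)
      have := sR_re_pos hμ hρ v
      simp only [Complex.norm_ofNat]
      gcongr
    have h2 := (ht.const_mul (-l)).cexp
    simpa using h2
  have := integral_of_hasDerivAt_of_tendsto hd (hi.const_mul l) hbot htop
  rw [integral_const_mul] at this
  exact eq_inv_of_mul_eq_one_right (by rw [this]; simp)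
lemma coef_repr {μ : ℂ} (hμ : 0 < μ.re) {ρ : ℝ} (hρ : 0 < ρ) (n : ℕ) :
    ∫ ξ in Ioi (0:ℝ), ((μ ^ 2 / 2 + (ξ:ℂ))⁻¹ * Complex.exp (-ξ)) * (lagPhi n ξ : ℂ) =
    ∫ v : ℝ, Complex.exp (-(μ ^ 2 / 2) * tauR μ ρ v) * wR μ ρ v *
      (tauR μ ρ v ^ n / (tauR μ ρ v + 2) ^ (n+1)) := by
  have hc := tauR_cont hμ hρ
  have hc2 := wR_cont hμ hρ
  have hphi : Continuous (fun ξ : ℝ => (lagPhi n ξ : ℂ)) := by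
    simp only [lagPhi_eq]; fun_prop
  have hphii : IntegrableOn (fun ξ : ℝ => (lagPhi n ξ : ℂ)) (Ioi 0) := by
    have := exp_phi_int 0 (by simp) n
    simpa using this
  set f : ℝ → ℝ → ℂ := fun ξ v => (lagPhi n ξ : ℂ) * (Complex.exp (-(μ ^ 2 / 2) * tauR μ ρ v) * wR μ ρ v) *
      Complex.exp (-(1 + tauR μ ρ v) * ξ) with hf
  have hint : Integrable (Function.uncurry f) ((volume.restrict (Ioi (0:ℝ))).prod volume) := by
    have hm := Integrable.mul_prod hphii (aw_int hμ hρ)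
    refine hm.mul_bdd (c := 1) ?_ ?_
    · refine (Continuous.aestronglyMeasurable ?_)
      fun_prop
    · have hmem : ∀ᵐ p : ℝ × ℝ ∂((volume.restrict (Ioi (0:ℝ))).prod volume), p.1 ∈ Ioi (0:ℝ) :=
        Measure.quasiMeasurePreserving_fst.ae (ae_restrict_mem measurableSet_Ioi)
      filter_upwards [hmem] with p hp
      have h := re_tau (sR_re_pos hμ hρ p.2)
      rw [← tauR] at h
      rw [Complex.norm_exp, Real.exp_le_one_iff, mul_comm, Complex.re_ofReal_mul]
      have hp : 0 < p.1 := hp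
      simp
      nlinarith
  have h1 : ∀ ξ ∈ Ioi (0:ℝ), ((μ ^ 2 / 2 + (ξ:ℂ))⁻¹ * Complex.exp (-ξ)) * (lagPhi n ξ : ℂ) = ∫ v, f ξ v := by
    intro ξ hξ
    rw [← inv_repr hμ hρ hξ, mul_assoc, ← integral_mul_const]
    congr 1
    funext v
    simp only [hf]
    rw [show -(1 + tauR μ ρ v) * (ξ:ℂ) = -ξ * tauR μ ρ v + -ξ by ring, Complex.exp_add]
    ring
  rw [setIntegral_congr_fun measurableSet_Ioi h1, integral_integral_swap hint]
  congr 1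
  funext v
  have h := re_tau (sR_re_pos hμ hρ v)
  rw [← tauR] at h
  have h2 := exp_phi_integral (1 + tauR μ ρ v) (by simp; linarith) n
  rw [show 1 + tauR μ ρ v - 1 = tauR μ ρ v by ring, show 1 + tauR μ ρ v + 1 = tauR μ ρ v + 2 by ring] at h2
  rw [← h2, ← integral_const_mul]
  congr 1
  funext ξ
  simp only [hf]
  ring

lemma integrand_bound {μ : ℂ} (hμ : 0 < μ.re) {n : ℕ} (hn : 0 < n) (v : ℝ) :
    ‖Complex.exp (-(μ ^ 2 / 2) * tauR μ (1 / √n) v) * wR μ (1 / √n) v *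
      (tauR μ (1 / √n) v ^ n / (tauR μ (1 / √n) v + 2) ^ (n+1))‖ ≤
    (KR μ * (‖μ‖ / μ.re) * Real.exp (-(2 * μ.re * √n))) * Real.exp (-(μ.re * √n) * v ^ 2) := by
  have hsq : 0 < √(n:ℝ) := Real.sqrt_pos.2 (by exact_mod_cast hn)
  have hρ : 0 < 1 / √(n:ℝ) := by positivity
  set ρ := 1 / √(n:ℝ) with hρd
  have hs := sR_re_pos hμ hρ v
  have h0 := exp_sub_one_ne hs
  have hE := Complex.exp_ne_zero (sR μ ρ v)
  have e1 : wR μ ρ v * (tauR μ ρ v ^ n / (tauR μ ρ v + 2) ^ (n+1)) =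
      Complex.exp (-sR μ ρ v) ^ n * (sR μ ρ v / (Complex.exp (sR μ ρ v) - 1)) := by
    have h3 : tauR μ ρ v + 2 = 2 * Complex.exp (sR μ ρ v) / (Complex.exp (sR μ ρ v) - 1) := by
      rw [tauR]; field_simp; ring
    have h4 : tauR μ ρ v / (tauR μ ρ v + 2) = Complex.exp (-sR μ ρ v) := by
      rw [h3, tauR, Complex.exp_neg]; field_simp
    rw [pow_succ, ← h4, div_pow]
    have : wR μ ρ v / (tauR μ ρ v + 2) = sR μ ρ v / (Complex.exp (sR μ ρ v) - 1) := by
      rw [h3, wR]; field_simp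
    rw [← this]
    field_simp
  rw [mul_assoc, e1, norm_mul, norm_mul, norm_pow, Complex.norm_exp (-sR μ ρ v), Complex.neg_re, sR_re, norm_div,
    ← Real.exp_nat_mul]
  have hb1 := expa_bound hμ hρ v
  have hb2 : ‖sR μ ρ v‖ / ‖Complex.exp (sR μ ρ v) - 1‖ ≤ ‖μ‖ / μ.re := by
    rw [← sR_ratio hμ hρ v]
    have := exp_sub_one_ge' (sR μ ρ v)
    gcongr
  have hK : 0 < KR μ := Real.exp_pos _
  calc _ ≤ (KR μ * Real.exp (-(μ.re / ρ * Real.exp (-v)))) *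
          (Real.exp (n * -(ρ * Real.exp v * μ.re)) * (‖μ‖ / μ.re)) := by gcongr
    _ = KR μ * (‖μ‖ / μ.re) * Real.exp (-(μ.re / ρ * Real.exp (-v)) + n * -(ρ * Real.exp v * μ.re)) := by
        rw [Real.exp_add]; ring
    _ ≤ KR μ * (‖μ‖ / μ.re) * Real.exp (-(2 * μ.re * √n) + -(μ.re * √n) * v ^ 2) := by
        refine mul_le_mul_of_nonneg_left (Real.exp_le_exp.2 ?_) (by positivity)
        have hnn : (n:ℝ) * ρ = √n := by
          rw [hρd, mul_one_div, Real.div_sqrt]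
        have h5 : μ.re / ρ = μ.re * √n := by rw [hρd]; simp
        have hc := cosh_ge v
        rw [Real.cosh_eq] at hc
        have h6 : (n:ℝ) * -(ρ * Real.exp v * μ.re) = -(√n * Real.exp v * μ.re) := by
          rw [← hnn]; ring
        rw [h5, h6]
        have hp : 0 < μ.re * √n := by positivity
        nlinarith
    _ = _ := by rw [Real.exp_add]; ring

lemma coef_bound {μ : ℂ} (hμ : 0 < μ.re) {n : ℕ} (hn : 0 < n) :
    ‖∫ ξ in Ioi (0:ℝ), ((μ ^ 2 / 2 + (ξ:ℂ))⁻¹ * Complex.exp (-ξ)) * (lagPhi n ξ : ℂ)‖ ^ 2 ≤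
    (KR μ * (‖μ‖ / μ.re)) ^ 2 * (Real.pi / μ.re) * (Real.exp (-(4 * μ.re) * √n) / √n) := by
  have hsq : 0 < √(n:ℝ) := Real.sqrt_pos.2 (by exact_mod_cast hn)
  have hρ : 0 < 1 / √(n:ℝ) := by positivity
  rw [coef_repr hμ hρ n]
  have h1 := norm_integral_le_of_norm_le ((integrable_exp_neg_mul_sq (by positivity : 0 < μ.re * √n)).const_mul
    (KR μ * (‖μ‖ / μ.re) * Real.exp (-(2 * μ.re * √n))))
    (Filter.Eventually.of_forall (integrand_bound hμ hn))
  rw [integral_const_mul, integral_gaussian] at h1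
  refine (pow_le_pow_left₀ (norm_nonneg _) h1 2).trans (le_of_eq ?_)
  rw [mul_pow, Real.sq_sqrt (by positivity), mul_pow, ← Real.exp_nat_mul]
  rw [show ((2:ℕ):ℝ) * -(2 * μ.re * √n) = -(4 * μ.re) * √n by push_cast; ring]
  field_simp

lemma tail_step {c : ℝ} (hc : 0 < c) {n : ℕ} (hn : 0 < n) :
    Real.exp (-c * √n) / √n ≤ (4 * (1 + c) / c) * (Real.exp (-c * √n) - Real.exp (-c * √(n+1 : ℕ))) := by
  have hsq : 1 ≤ √(n:ℝ) := Real.one_le_sqrt.2 (by exact_mod_cast hn)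
  set x := √(n:ℝ) with hx
  set y := √((n+1 : ℕ):ℝ) with hy
  have hx2 : x ^ 2 = n := Real.sq_sqrt (by positivity)
  have hy2 : y ^ 2 = n + 1 := by rw [hy, Real.sq_sqrt (by positivity)]; push_cast; ring
  have hy0 : 0 ≤ y := Real.sqrt_nonneg _
  have hyx : y ≤ 2 * x := by nlinarith
  have hxy : x < y := by nlinarith
  set d := y - x with hd
  have hd0 : 0 < d := by linarith
  have hd1 : 1 / (4 * x) ≤ d := by
    rw [div_le_iff₀ (by positivity)]
    have : (y - x) * (y + x) = 1 := by nlinarith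
    nlinarith
  have hdle : d ≤ 1 := by nlinarith
  have e : Real.exp (-c * y) = Real.exp (-c * x) * Real.exp (-(c * d)) := by
    rw [← Real.exp_add, hd]; ring_nf
  have h1 : c * d / (1 + c) ≤ 1 - Real.exp (-(c*d)) := by
    have h2 := Real.add_one_le_exp (c * d)
    have h3 : Real.exp (-(c*d)) ≤ 1 / (1 + c * d) := by
      rw [Real.exp_neg, ← one_div]
      gcongr
      linarith
    have h4 : 1 - 1 / (1 + c * d) = c * d / (1 + c * d) := by
      have : 0 < c * d := by positivity
      field_simp; ring
    have h5 : c * d / (1 + c) ≤ c * d / (1 + c * d) := by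
      gcongr
      nlinarith
    linarith
  have hE := Real.exp_pos (-c * x)
  rw [e]
  calc Real.exp (-c * x) / x = (4 * (1 + c) / c) * (Real.exp (-c * x) * (c * (1 / (4 * x)) / (1 + c))) := by
        field_simp
    _ ≤ (4 * (1 + c) / c) * (Real.exp (-c * x) * (1 - Real.exp (-(c*d)))) := by
        gcongr
        refine le_trans ?_ h1
        gcongr
    _ = _ := by ring

lemma tail_sum {c : ℝ} (hc : 0 < c) {m : ℕ} (hm : 0 < m) (k : ℕ) :
    ∑ n ∈ Finset.Ico m (m + k), Real.exp (-c * √n) / √n ≤ (4 * (1 + c) / c) * Real.exp (-c * √m) := by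
  have : ∑ n ∈ Finset.Ico m (m + k), Real.exp (-c * √n) / √n ≤
      (4 * (1 + c) / c) * (Real.exp (-c * √m) - Real.exp (-c * √(m+k : ℕ))) := by
    induction k with
    | zero => simp
    | succ k ih =>
      rw [← add_assoc, Finset.sum_Ico_succ_top (by omega)]
      have := tail_step hc (n := m + k) (by omega)
      linarith
  refine this.trans ?_
  gcongr
  linarith [Real.exp_pos (-c * √(m+k : ℕ))]
/-- orthogonal residual -/
noncomputable def resid {H : Type*} [NormedAddCommGroup H] [InnerProductSpace ℂ H] (e : ℕ → H) (M : ℕ) :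
    H →ₗ[ℂ] H :=
  LinearMap.id - ∑ n ∈ Finset.range M, (innerₛₗ ℂ (e n)).smulRight (e n)

section hilb
variable {H : Type*} [NormedAddCommGroup H] [InnerProductSpace ℂ H] {e : ℕ → H}

lemma resid_apply (M : ℕ) (F : H) :
    resid e M F = F - ∑ n ∈ Finset.range M, inner ℂ (e n) F • e n := by
  simp [resid]

lemma resid_e (he : Orthonormal ℂ e) {M n : ℕ} (hn : n < M) : resid e M (e n) = 0 := by
  rw [resid_apply, Finset.sum_eq_single n]
  · simp [inner_self_eq_norm_sq_to_K, he.1 n]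
  · intro m _ hm
    rw [he.2 hm, zero_smul]
  · intro h; exact absurd (Finset.mem_range.2 hn) h

lemma resid_norm (he : Orthonormal ℂ e) (M : ℕ) (F : H) :
    ‖resid e M F‖ ^ 2 = ‖F‖ ^ 2 - ∑ n ∈ Finset.range M, ‖inner ℂ (e n) F‖ ^ 2 := by
  set P := ∑ n ∈ Finset.range M, inner ℂ (e n) F • e n with hP
  have h1 : inner ℂ P F = ((∑ n ∈ Finset.range M, ‖inner ℂ (e n) F‖ ^ 2 : ℝ) : ℂ) := by
    rw [hP, sum_inner]
    push_cast
    refine Finset.sum_congr rfl fun n _ => ?_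
    rw [inner_smul_left, Complex.conj_mul']
  have h2 : inner ℂ P P = ((∑ n ∈ Finset.range M, ‖inner ℂ (e n) F‖ ^ 2 : ℝ) : ℂ) := by
    rw [hP, he.inner_sum]
    push_cast
    refine Finset.sum_congr rfl fun n _ => ?_
    rw [Complex.conj_mul']
  have h3 : ‖P‖ ^ 2 = ∑ n ∈ Finset.range M, ‖inner ℂ (e n) F‖ ^ 2 := by
    rw [← inner_self_eq_norm_sq (𝕜 := ℂ), h2]; exact Complex.ofReal_re _
  rw [resid_apply, ← hP, @norm_sub_sq ℂ, ← inner_conj_symm, h1, h3]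
  rw [RCLike.conj_re]
  simp only [RCLike.re_eq_complex_re, Complex.ofReal_re]
  ring

lemma resid_le (he : Orthonormal ℂ e) (M : ℕ) (F : H) : ‖resid e M F‖ ≤ ‖F‖ := by
  have h := resid_norm he M F
  have : 0 ≤ ∑ n ∈ Finset.range M, ‖inner ℂ (e n) F‖ ^ 2 := Finset.sum_nonneg fun _ _ => by positivity
  by_contra! hc
  nlinarith [norm_nonneg F, norm_nonneg (resid e M F)]

lemma resid_tail (he : Orthonormal ℂ e) {m M : ℕ} (h : m ≤ M) (F : H) :
    ‖resid e m F‖ ^ 2 = ‖resid e M F‖ ^ 2 + ∑ n ∈ Finset.Ico m M, ‖inner ℂ (e n) F‖ ^ 2 := by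
  rw [resid_norm he, resid_norm he, ← Finset.sum_range_add_sum_Ico _ h]; ring

end hilb

/-- the half-line measure -/
noncomputable abbrev nuL : Measure ℝ := volume.restrict (Ioi (0:ℝ))

open Classical in
/-- total version of `toLp` -/
noncomputable def TL (f : ℝ → ℂ) : Lp ℂ 2 nuL := if h : MemLp f 2 nuL then h.toLp f else 0

lemma TL_eq {f : ℝ → ℂ} (h : MemLp f 2 nuL) : TL f = h.toLp f := dif_pos h

lemma TL_congr {f g : ℝ → ℂ} (hf : MemLp f 2 nuL) (hg : MemLp g 2 nuL) (h : ∀ x > 0, f x = g x) :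
    TL f = TL g := by
  rw [TL_eq hf, TL_eq hg, MemLp.toLp_eq_toLp_iff]
  filter_upwards [ae_restrict_mem measurableSet_Ioi] with x hx
  exact h x hx

lemma TL_add {f g : ℝ → ℂ} (hf : MemLp f 2 nuL) (hg : MemLp g 2 nuL) :
    TL (fun x => f x + g x) = TL f + TL g := by
  have := MemLp.toLp_add hf hg
  rw [TL_eq hf, TL_eq hg, ← this]
  exact TL_eq (hf.add hg)

lemma TL_smul (c : ℂ) {f : ℝ → ℂ} (hf : MemLp f 2 nuL) :
    TL (fun x => c * f x) = c • TL f := by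
  have := MemLp.toLp_const_smul c hf
  rw [TL_eq hf, ← this]
  exact TL_eq (hf.const_smul c)

lemma TL_sub {f g : ℝ → ℂ} (hf : MemLp f 2 nuL) (hg : MemLp g 2 nuL) :
    TL (fun x => f x - g x) = TL f - TL g := by
  have := MemLp.toLp_sub hf hg
  rw [TL_eq hf, TL_eq hg, ← this]
  exact TL_eq (hf.sub hg)

lemma memLp_comb (s : Finset ℕ) (c : ℕ → ℂ) (f : ℕ → ℝ → ℂ) (hf : ∀ i, MemLp (f i) 2 nuL) :
    MemLp (fun x => ∑ i ∈ s, c i * f i x) 2 nuL :=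
  memLp_finsetSum s fun i _ => (hf i).const_mul (c i)

lemma TL_sum (s : Finset ℕ) (c : ℕ → ℂ) (f : ℕ → ℝ → ℂ) (hf : ∀ i, MemLp (f i) 2 nuL) :
    TL (fun x => ∑ i ∈ s, c i * f i x) = ∑ i ∈ s, c i • TL (f i) := by
  classical
  induction s using Finset.induction_on with
  | empty =>
    simp only [Finset.sum_empty]
    have : TL (fun _ => (0:ℂ) * 0) = (0:ℂ) • TL (fun _ => 0) := TL_smul 0 (MemLp.zero' )
    simpa using this
  | insert i s hi ih =>
    simp only [Finset.sum_insert hi]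
    rw [TL_add ((hf i).const_mul (c i)) (memLp_comb s c f hf), ih, TL_smul _ (hf i)]

lemma TL_inner {f g : ℝ → ℂ} (hf : MemLp f 2 nuL) (hg : MemLp g 2 nuL) :
    inner ℂ (TL f) (TL g) = ∫ t in Ioi (0:ℝ), g t * starRingEnd ℂ (f t) := by
  rw [TL_eq hf, TL_eq hg, L2.inner_def]
  refine integral_congr_ae ?_
  filter_upwards [hf.coeFn_toLp, hg.coeFn_toLp] with t h1 h2
  rw [h1, h2, RCLike.inner_apply]

lemma TL_mul_le {f g : ℝ → ℂ} (hf : MemLp f 2 nuL) {K : ℝ} 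
    (hg : MemLp (fun x => g x * f x) 2 nuL) (hgK : ∀ x > 0, ‖g x‖ ≤ K) :
    ‖TL (fun x => g x * f x)‖ ≤ K * ‖TL f‖ := by
  rw [TL_eq hf, TL_eq hg]
  refine Lp.norm_le_mul_norm_of_ae_le_mul ?_
  filter_upwards [hf.coeFn_toLp, hg.coeFn_toLp, ae_restrict_mem measurableSet_Ioi] with t h1 h2 h3
  rw [h1, h2, norm_mul]
  exact mul_le_mul_of_nonneg_right (hgK t h3) (norm_nonneg _)

noncomputable def mono (j : ℕ) (t : ℝ) : ℂ := (t:ℂ) ^ j * Complex.exp (-t)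

lemma mono_memLp (j : ℕ) : MemLp (mono j) 2 nuL := by
  have hc : Continuous (mono j) := by unfold mono; fun_prop
  rw [memLp_two_iff_integrable_sq_norm hc.aestronglyMeasurable]
  have := (powexp_int 2 (by norm_num) (2*j)).norm
  refine this.congr (Filter.Eventually.of_forall fun t => ?_)
  simp only [mono]
  rw [← norm_pow, mul_pow, ← Complex.exp_nat_mul, ← pow_mul]
  congr 2
  · ring
  · push_cast; ring_nf

noncomputable def cf (n k : ℕ) : ℂ := (n.choose k : ℂ) * (-2) ^ k / (Nat.factorial k : ℂ)

noncomputable def phiC (n : ℕ) (t : ℝ) : ℂ := (lagPhi n t : ℂ)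

lemma phiC_eq (n : ℕ) : phiC n = fun t => ∑ k ∈ Finset.range (n + 1), cf n k * mono k t := by
  funext t; exact lagPhi_eq n t

lemma phiC_memLp (n : ℕ) : MemLp (phiC n) 2 nuL := by
  rw [phiC_eq]; exact memLp_comb _ _ _ mono_memLp

lemma phiC_inner (f : ℝ → ℂ) (hf : MemLp f 2 nuL) (n : ℕ) :
    inner ℂ (TL (phiC n)) (TL f) = ∫ t in Ioi (0:ℝ), f t * (lagPhi n t : ℂ) := by
  rw [TL_inner (phiC_memLp n) hf]
  simp [phiC]

noncomputable def eL (n : ℕ) : Lp ℂ 2 nuL := ((√2 : ℝ) : ℂ) • TL (phiC n)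

lemma sq2 : ((√2 : ℝ) : ℂ) * ((√2 : ℝ) : ℂ) = 2 := by
  rw [← Complex.ofReal_mul, Real.mul_self_sqrt (by norm_num)]; norm_num

lemma eL_orth : Orthonormal ℂ eL := by
  rw [orthonormal_iff_ite]
  intro i j
  rw [eL, eL, inner_smul_left, inner_smul_right, phiC_inner _ (phiC_memLp j), Complex.conj_ofReal]
  unfold phiC
  rw [phi_orth, ← mul_assoc, sq2]
  by_cases h : i = j
  · simp [h]
  · simp [h, Ne.symm h]

lemma eL_proj (f : ℝ → ℂ) (hf : MemLp f 2 nuL) (N : ℕ) :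
    MemLp (lagProj N f) 2 nuL ∧ TL (fun x => f x - lagProj N f x) = resid eL (N+1) (TL f) := by
  have h1 : lagProj N f = fun ξ => ∑ n ∈ Finset.range (N + 1),
    (2 * ∫ t in Ioi (0:ℝ), f t * (lagPhi n t : ℂ)) * phiC n ξ := rfl
  have hm : MemLp (lagProj N f) 2 nuL := by rw [h1]; exact memLp_comb _ _ _ phiC_memLp
  refine ⟨hm, ?_⟩
  rw [TL_sub hf hm, resid_apply, h1, TL_sum _ _ _ phiC_memLp]
  congr 1
  refine Finset.sum_congr rfl fun n _ => ?_
  rw [← phiC_inner f hf n, eL, inner_smul_left, smul_smul, Complex.conj_ofReal]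
  congr 1
  rw [← sq2]; ring

lemma resid_phi {M n : ℕ} (h : n < M) : resid eL M (TL (phiC n)) = 0 := by
  have h1 := resid_e eL_orth h
  rw [eL, map_smul, smul_eq_zero] at h1
  refine h1.resolve_left ?_
  simp

lemma resid_mono (M j : ℕ) (h : j < M) : resid eL M (TL (mono j)) = 0 := by
  induction j using Nat.strong_induction_on with
  | _ j ih =>
    have h1 := resid_phi h
    rw [phiC_eq, TL_sum _ _ _ mono_memLp, map_sum, Finset.sum_range_succ, Finset.sum_eq_zero, zero_add,
      map_smul, smul_eq_zero] at h1
    · refine h1.resolve_left ?_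
      have : (j.factorial : ℂ) ≠ 0 := by exact_mod_cast j.factorial_ne_zero
      simp [cf, this]
    · intro k hk
      have hk := Finset.mem_range.1 hk
      rw [map_smul, ih k hk (by omega), smul_zero]

lemma exists_inv_bound (a : ℂ) (ha : ∀ x : ℝ, x ≤ 0 → a ≠ (x : ℂ)) :
    ∃ K : ℝ, 0 < K ∧ ∀ x : ℝ, x > 0 → ‖(a + (x:ℂ))⁻¹‖ ≤ K := by
  have : ∃ c : ℝ, 0 < c ∧ ∀ x : ℝ, x > 0 → c ≤ ‖a + (x:ℂ)‖ := by
    by_cases him : a.im = 0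
    · have hre : 0 < a.re := by
        by_contra! h
        exact ha a.re h (Complex.ext (by simp) (by simp [him]))
      refine ⟨a.re, hre, fun x hx => ?_⟩
      have := Complex.re_le_norm (a + x)
      simp at this
      linarith
    · refine ⟨|a.im|, abs_pos.2 him, fun x hx => ?_⟩
      have := Complex.abs_im_le_norm (a + x)
      simpa using this
  obtain ⟨c, hc, h⟩ := this
  refine ⟨c⁻¹, by positivity, fun x hx => ?_⟩
  rw [norm_inv]
  have := h x hx
  gcongr

section aa
variable {a : ℂ}

lemma inv_mul_memLp (ha : ∀ x : ℝ, x ≤ 0 → a ≠ (x : ℂ)) {f : ℝ → ℂ} (hf : MemLp f 2 nuL) : MemLp (fun x : ℝ => (a + (x:ℂ))⁻¹ * f x) 2 nuL := by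
  obtain ⟨K, hK, h⟩ := exists_inv_bound a ha
  have hm : Measurable (fun x : ℝ => (a + (x:ℂ))⁻¹) := by fun_prop
  refine MemLp.of_le_mul (c := K) hf (hm.aestronglyMeasurable.mul hf.1) ?_
  filter_upwards [ae_restrict_mem measurableSet_Ioi] with x hx
  rw [norm_mul]
  exact mul_le_mul_of_nonneg_right (h x hx) (norm_nonneg _)

lemma resid_mono_inv (ha : ∀ x : ℝ, x ≤ 0 → a ≠ (x : ℂ)) {M k : ℕ} (h : k ≤ M) :
    resid eL M (TL (fun x : ℝ => (a + (x:ℂ))⁻¹ * mono k x)) =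
      (-a) ^ k • resid eL M (TL (fun x : ℝ => (a + (x:ℂ))⁻¹ * mono 0 x)) := by
  have hm0 := inv_mul_memLp ha (mono_memLp 0)
  have e1 : TL (fun x : ℝ => (a + (x:ℂ))⁻¹ * mono k x) = (-a) ^ k • TL (fun x : ℝ => (a + (x:ℂ))⁻¹ * mono 0 x)
      + ∑ i ∈ Finset.range k, (-a) ^ (k - 1 - i) • TL (mono i) := by
    rw [← TL_sum _ _ _ mono_memLp, ← TL_smul _ hm0, ← TL_add (hm0.const_mul _) (memLp_comb _ _ _ mono_memLp)]
    have hm1 := inv_mul_memLp ha (mono_memLp k)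
    refine TL_congr hm1 ((hm0.const_mul _).add (memLp_comb _ _ _ mono_memLp)) fun x hx => ?_
    have hne : a + (x:ℂ) ≠ 0 := by
      intro h
      refine ha (-x) (by linarith) ?_
      push_cast
      linear_combination h
    have hg := geom_sum₂_mul (x:ℂ) (-a) k
    have : ∑ i ∈ Finset.range k, (-a) ^ (k - 1 - i) * mono i x =
        (∑ i ∈ Finset.range k, (x:ℂ) ^ i * (-a) ^ (k - 1 - i)) * Complex.exp (-x) := by
      rw [Finset.sum_mul]
      refine Finset.sum_congr rfl fun i _ => ?_
      rw [mono]; ring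
    rw [this, mono, mono]
    field_simp
    linear_combination -hg
  rw [e1, map_add, map_smul, map_sum, Finset.sum_eq_zero, add_zero]
  intro i hi
  have hi := Finset.mem_range.1 hi
  rw [map_smul, resid_mono M i (by omega), smul_zero]

lemma resid_phi_inv (ha : ∀ x : ℝ, x ≤ 0 → a ≠ (x : ℂ)) {M n : ℕ} (h : n ≤ M) :
    resid eL M (TL (fun x : ℝ => (a + (x:ℂ))⁻¹ * phiC n x)) =
      lagC n (-(2 * a)) • resid eL M (TL (fun x : ℝ => (a + (x:ℂ))⁻¹ * mono 0 x)) := by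
  have e1 : (fun x : ℝ => (a + (x:ℂ))⁻¹ * phiC n x) =
      fun x : ℝ => ∑ k ∈ Finset.range (n + 1), cf n k * ((a + (x:ℂ))⁻¹ * mono k x) := by
    funext x
    rw [phiC_eq, Finset.mul_sum]
    exact Finset.sum_congr rfl fun k _ => by ring
  rw [e1, TL_sum _ _ (fun k (x : ℝ) => (a + (x:ℂ))⁻¹ * mono k x) (fun k => inv_mul_memLp ha (mono_memLp k)), map_sum, lagC, Finset.sum_smul]
  refine Finset.sum_congr rfl fun k hk => ?_
  have hk := Finset.mem_range.1 hk
  rw [map_smul, resid_mono_inv ha (by omega), smul_smul, cf]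
  congr 1
  rw [neg_neg, show 2 * a = (-2) * (-a) by ring, mul_pow]
  ring

lemma resid_comb_inv (ha : ∀ x : ℝ, x ≤ 0 → a ≠ (x : ℂ)) {M : ℕ} (d : ℕ → ℂ) (M' : ℕ) (h : M' ≤ M + 1) :
    resid eL M (TL (fun x : ℝ => (a + (x:ℂ))⁻¹ * ∑ n ∈ Finset.range M', d n * phiC n x)) =
      (∑ n ∈ Finset.range M', d n * lagC n (-(2 * a))) •
        resid eL M (TL (fun x : ℝ => (a + (x:ℂ))⁻¹ * mono 0 x)) := by
  have e1 : (fun x : ℝ => (a + (x:ℂ))⁻¹ * ∑ n ∈ Finset.range M', d n * phiC n x) =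
      fun x : ℝ => ∑ n ∈ Finset.range M', d n * ((a + (x:ℂ))⁻¹ * phiC n x) := by
    funext x
    rw [Finset.mul_sum]
    exact Finset.sum_congr rfl fun k _ => by ring
  rw [e1, TL_sum _ _ (fun k (x : ℝ) => (a + (x:ℂ))⁻¹ * phiC k x) (fun k => inv_mul_memLp ha (phiC_memLp k)), map_sum, Finset.sum_smul]
  refine Finset.sum_congr rfl fun n hn => ?_
  have hn := Finset.mem_range.1 hn
  rw [map_smul, resid_phi_inv ha (by omega), smul_smul]

lemma resid_small (ha : ∀ x : ℝ, x ≤ 0 → a ≠ (x : ℂ)) : ∃ K : ℝ, ∀ M : ℕ, (∑ n ∈ Finset.range M, ‖lagC n (-(2 * a))‖ ^ 2) *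
    ‖resid eL M (TL (fun x : ℝ => (a + (x:ℂ))⁻¹ * mono 0 x))‖ ^ 2 ≤ K := by
  obtain ⟨K, hK, h⟩ := exists_inv_bound a ha
  refine ⟨K ^ 2, fun M => ?_⟩
  set S := ∑ n ∈ Finset.range M, ‖lagC n (-(2 * a))‖ ^ 2 with hS
  have hS0 : 0 ≤ S := Finset.sum_nonneg fun _ _ => by positivity
  set R := ‖resid eL M (TL (fun x : ℝ => (a + (x:ℂ))⁻¹ * mono 0 x))‖ with hR
  set d : ℕ → ℂ := fun n => starRingEnd ℂ (lagC n (-(2 * a))) with hd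
  have h1 := resid_comb_inv ha (M := M) d M (by omega)
  have hsum : ∑ n ∈ Finset.range M, d n * lagC n (-(2 * a)) = (S : ℂ) := by
    rw [hS]; push_cast
    refine Finset.sum_congr rfl fun n _ => ?_
    rw [hd, Complex.conj_mul']
  rw [hsum] at h1
  have hmem := memLp_comb (Finset.range M) d phiC phiC_memLp
  have h2 : S * R ≤ K * ‖TL (fun x => ∑ n ∈ Finset.range M, d n * phiC n x)‖ := by
    have h3 := congrArg norm h1
    rw [norm_smul, Complex.norm_real, Real.norm_of_nonneg hS0] at h3
    rw [hR, ← h3]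
    refine (resid_le eL_orth _ _).trans ?_
    exact TL_mul_le (g := fun x : ℝ => (a + (x:ℂ))⁻¹) hmem (inv_mul_memLp ha hmem) h
  have h4 : ‖TL (fun x => ∑ n ∈ Finset.range M, d n * phiC n x)‖ ^ 2 ≤ S := by
    have h5 : ((√2 : ℝ) : ℂ) • TL (fun x => ∑ n ∈ Finset.range M, d n * phiC n x) =
        ∑ n ∈ Finset.range M, d n • eL n := by
      rw [TL_sum _ _ _ phiC_memLp, Finset.smul_sum]
      refine Finset.sum_congr rfl fun n _ => ?_
      rw [eL, smul_comm]
    have h6 : ‖∑ n ∈ Finset.range M, d n • eL n‖ ^ 2 = S := by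
      rw [← inner_self_eq_norm_sq (𝕜 := ℂ), eL_orth.inner_sum, hS]
      rw [map_sum]
      refine Finset.sum_congr rfl fun n _ => ?_
      rw [Complex.conj_mul', hd, Complex.norm_conj]
      simp [← Complex.ofReal_pow]
    rw [← h5, norm_smul, mul_pow, Complex.norm_real, Real.norm_of_nonneg (by positivity),
      Real.sq_sqrt (by norm_num)] at h6
    nlinarith [sq_nonneg ‖TL (fun x => ∑ n ∈ Finset.range M, d n * phiC n x)‖]
  have h7 : (S * R) ^ 2 ≤ K ^ 2 * S := by
    refine (pow_le_pow_left₀ (by positivity) h2 2).trans ?_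
    rw [mul_pow]
    gcongr
  rcases hS0.eq_or_lt with h0 | h0
  · rw [← h0, zero_mul]; positivity
  · have : S * (S * R ^ 2) ≤ S * K ^ 2 := by nlinarith
    exact le_of_mul_le_mul_left this h0

end aa
lemma le_of_sq_le_sqX {x y : ℝ} (h : x ^ 2 ≤ y ^ 2) (hy : 0 ≤ y) : x ≤ y := by
  by_contra! hc
  nlinarith

lemma mu_facts (a : ℂ) (ha : ∀ x : ℝ, x ≤ 0 → a ≠ (x : ℂ)) :
    ∃ μ : ℂ, μ ^ 2 = 2 * a ∧ 0 < μ.re ∧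
      ∀ N : ℕ, ((2 * a * ((N : ℂ) + 1)) ^ ((1:ℂ)/2)).re = √((N + 1 : ℕ) : ℝ) * μ.re := by
  have ha0 : a ≠ 0 := by simpa using ha 0 le_rfl
  have h2a : 2 * a ≠ 0 := by simpa using ha0
  refine ⟨(2 * a) ^ ((1:ℂ)/2), ?_, ?_, ?_⟩
  · rw [← Complex.cpow_nat_mul]; norm_num
  · have harg : (2 * a).arg ≠ Real.pi := by
      intro h
      rw [Complex.arg_eq_pi_iff] at h
      obtain ⟨h1, h2⟩ := h
      simp at h1 h2
      exact ha a.re (by linarith) (Complex.ext (by simp) (by simp [h2]))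
    have h1 := Complex.neg_pi_lt_arg (2 * a)
    have h2 := lt_of_le_of_ne (Complex.arg_le_pi (2 * a)) harg
    rw [Complex.cpow_def_of_ne_zero h2a, Complex.exp_re]
    have him : (Complex.log (2 * a) * (1 / 2)).im = (2 * a).arg / 2 := by
      rw [show Complex.log (2 * a) * (1 / 2) = ((1/2 : ℝ) : ℂ) * Complex.log (2 * a) by push_cast; ring,
        Complex.im_ofReal_mul, Complex.log_im]
      ring
    rw [him]
    refine mul_pos (Real.exp_pos _) (Real.cos_pos_of_mem_Ioo ⟨by linarith, by linarith⟩)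
  · intro N
    have hN : (0:ℝ) < ((N + 1 : ℕ) : ℝ) := by positivity
    have e1 : 2 * a * ((N : ℂ) + 1) = (((N + 1 : ℕ) : ℝ) : ℂ) * (2 * a) := by push_cast; ring
    have hne : (((N + 1 : ℕ) : ℝ) : ℂ) * (2 * a) ≠ 0 :=
      mul_ne_zero (Complex.ofReal_ne_zero.2 hN.ne') h2a
    rw [e1, Complex.cpow_def_of_ne_zero hne, Complex.log_ofReal_mul hN h2a, add_mul, Complex.exp_add,
      ← Complex.cpow_def_of_ne_zero h2a]
    have e2 : Complex.exp ((Real.log ((N + 1 : ℕ) : ℝ) : ℂ) * (1 / 2)) = ((√((N + 1 : ℕ) : ℝ) : ℝ) : ℂ) := by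
      rw [Real.sqrt_eq_rpow, Real.rpow_def_of_pos hN]
      push_cast
      rfl
    rw [e2, Complex.re_ofReal_mul]

lemma scal_bound (a b : ℂ) (hb : 0 < b.re) : ∃ Cp : ℝ, 0 ≤ Cp ∧ ∀ N : ℕ,
    ‖∑ n ∈ Finset.range (N + 1), (2 * ((b - 1) ^ n / (b + 1) ^ (n + 1))) * lagC n (-(2 * a))‖ ≤ Cp := by
  have hb1 : b + 1 ≠ 0 := by
    intro h
    have := congrArg Complex.re h
    simp at this; linarith
  have hw : ‖(b - 1) / (b + 1)‖ < 1 := by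
    rw [norm_div, div_lt_one (norm_pos_iff.2 hb1)]
    refine lt_of_pow_lt_pow_left₀ 2 (norm_nonneg _) ?_
    rw [Complex.sq_norm, Complex.sq_norm, Complex.normSq_apply, Complex.normSq_apply]
    simp
    nlinarith
  have hs := ((lagC_gen (-(2 * a)) _ hw).summable.norm).mul_left ‖2 / (b + 1)‖
  refine ⟨∑' n, ‖2 / (b + 1)‖ * ‖lagC n (-(2 * a)) * ((b - 1) / (b + 1)) ^ n‖,
    tsum_nonneg fun _ => by positivity, fun N => ?_⟩
  refine (norm_sum_le _ _).trans ?_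
  refine le_trans (le_of_eq ?_) (hs.sum_le_tsum (Finset.range (N + 1)) fun _ _ => by positivity)
  refine Finset.sum_congr rfl fun n _ => ?_
  rw [← norm_mul]
  congr 1
  rw [div_pow, pow_succ]
  field_simp

lemma resid_decay (a : ℂ) (ha : ∀ x : ℝ, x ≤ 0 → a ≠ (x : ℂ)) {μ : ℂ} (hμ2 : μ ^ 2 = 2 * a)
    (hμ : 0 < μ.re) : ∃ B : ℝ, 0 ≤ B ∧ ∀ N : ℕ,
    ‖resid eL (N + 1) (TL (fun x : ℝ => (a + (x:ℂ))⁻¹ * mono 0 x))‖ ^ 2 ≤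
      B * Real.exp (-(4 * μ.re) * √((N + 1 : ℕ) : ℝ)) := by
  set F := TL (fun x : ℝ => (a + (x:ℂ))⁻¹ * mono 0 x) with hF
  set A := (KR μ * (‖μ‖ / μ.re)) ^ 2 * (Real.pi / μ.re) with hA
  have hA0 : 0 ≤ A := by have := Real.pi_pos; positivity
  have hmem := inv_mul_memLp ha (mono_memLp 0)
  have hco : ∀ n : ℕ, 0 < n → ‖inner ℂ (eL n) F‖ ^ 2 ≤ 2 * A * (Real.exp (-(4 * μ.re) * √n) / √n) := by
    intro n hn
    rw [eL, inner_smul_left, hF, phiC_inner _ hmem, Complex.conj_ofReal, norm_mul, mul_pow,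
      Complex.norm_real, Real.norm_of_nonneg (by positivity), Real.sq_sqrt (by norm_num), mul_assoc]
    refine mul_le_mul_of_nonneg_left ?_ (by norm_num)
    have := coef_bound hμ hn
    rw [hμ2, mul_div_cancel_left₀ _ (two_ne_zero)] at this
    simpa [mono] using this
  obtain ⟨K, hK⟩ := resid_small ha
  have hK0 : 0 ≤ K := by simpa using hK 0
  refine ⟨2 * A * (4 * (1 + 4 * μ.re) / (4 * μ.re)), by positivity, fun N => ?_⟩
  refine le_of_forall_pos_le_add fun ε hε => ?_
  obtain ⟨M, hM⟩ := lagC_div μ hμ (K / ε + 1)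
  rw [hμ2] at hM
  have hM' : K / ε + 1 ≤ ∑ n ∈ Finset.range (N + 1 + M), ‖lagC n (-(2 * a))‖ ^ 2 := by
    refine hM.trans (Finset.sum_le_sum_of_subset_of_nonneg ?_ fun _ _ _ => by positivity)
    intro i hi
    simp only [Finset.mem_range] at hi ⊢
    omega
  rw [resid_tail eL_orth (Nat.le_add_right (N + 1) M), add_comm]
  refine add_le_add ?_ ?_
  · have h1 : ∀ n ∈ Finset.Ico (N + 1) (N + 1 + M), ‖inner ℂ (eL n) F‖ ^ 2 ≤
        2 * A * (Real.exp (-(4 * μ.re) * √n) / √n) := fun n hn =>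
      hco n (by have := Finset.mem_Ico.1 hn; omega)
    refine (Finset.sum_le_sum h1).trans ?_
    rw [← Finset.mul_sum, mul_assoc (2 * A)]
    exact mul_le_mul_of_nonneg_left (tail_sum (by positivity) (Nat.succ_pos N) M) (by positivity)
  · have h1 := hK (N + 1 + M)
    set r := ‖resid eL (N + 1 + M) F‖ ^ 2 with hr
    have hr0 : 0 ≤ r := by positivity
    have h2 := (mul_le_mul_of_nonneg_right hM' hr0).trans h1
    by_contra! hc
    have h3 : K ≤ K / ε * r := by
      rw [div_mul_eq_mul_div, le_div_iff₀ hε]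
      exact mul_le_mul_of_nonneg_left hc.le hK0
    nlinarith

theorem lagEps_bound (a : ℂ) (ha : ∀ x : ℝ, x ≤ 0 → a ≠ (x : ℂ)) (b : ℂ) (hb : 0 < b.re) :
    ∃ C > (0:ℝ), ∀ N : ℕ,
      lagEps N a b
        ≤ ENNReal.ofReal
            (C * Real.exp (-2 * ((2 * a * ((N : ℂ) + 1)) ^ ((1:ℂ)/2)).re)) := by
  obtain ⟨μ, hμ2, hμ, hsq⟩ := mu_facts a ha
  obtain ⟨Cp, hCp, hC⟩ := scal_bound a b hb
  obtain ⟨B, hB, hdec⟩ := resid_decay a ha hμ2 hμ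
  refine ⟨Cp * √B + 1, by positivity, fun N => ?_⟩
  rw [hsq N]
  have hproj : lagProj N (fun t => Complex.exp (-b * t)) = fun x : ℝ =>
      ∑ n ∈ Finset.range (N + 1), (2 * ((b - 1) ^ n / (b + 1) ^ (n + 1))) * phiC n x := by
    funext x
    unfold lagProj
    refine Finset.sum_congr rfl fun n _ => ?_
    rw [exp_phi_integral b (by linarith) n, phiC]
  have hmem := memLp_comb (Finset.range (N + 1)) (fun n => 2 * ((b - 1) ^ n / (b + 1) ^ (n + 1)))
    phiC phiC_memLp
  have hG := inv_mul_memLp ha hmem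
  obtain ⟨hP, hres⟩ := eL_proj _ hG N
  have hr := resid_comb_inv ha (M := N + 1) (fun n => 2 * ((b - 1) ^ n / (b + 1) ^ (n + 1))) (N + 1)
    (by omega)
  have hfin : ‖TL (fun x : ℝ => (a + (x:ℂ))⁻¹ * lagProj N (fun t => Complex.exp (-b * t)) x
        - lagProj N (fun ξ' => (a + (ξ':ℂ))⁻¹
            * lagProj N (fun t => Complex.exp (-b * t)) ξ') x)‖ ≤
      (Cp * √B + 1) * Real.exp (-2 * (√((N + 1 : ℕ) : ℝ) * μ.re)) := by
    rw [hproj, hres, hr, norm_smul]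
    have h1 : ‖resid eL (N + 1) (TL (fun x : ℝ => (a + (x:ℂ))⁻¹ * mono 0 x))‖ ≤
        √B * Real.exp (-2 * (√((N + 1 : ℕ) : ℝ) * μ.re)) := by
      refine le_of_sq_le_sqX ?_ (by positivity)
      rw [mul_pow, Real.sq_sqrt hB, ← Real.exp_nat_mul]
      refine (hdec N).trans (le_of_eq ?_)
      congr 2
      push_cast
      ring
    refine (mul_le_mul (hC N) h1 (norm_nonneg _) hCp).trans ?_
    have := Real.exp_pos (-2 * (√((N + 1 : ℕ) : ℝ) * μ.re))
    nlinarith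
  unfold lagEps
  rw [hproj] at hfin ⊢
  have hD := hG.sub hP
  have hE := TL_eq hD
  have h2 := Lp.enorm_toLp (hf := hD)
  rw [← hE] at h2
  refine h2.symm.le.trans ?_
  rw [← ofReal_norm]
  exact ENNReal.ofReal_le_ofReal hfin
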